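/- Let d ≥ 1 and let s ≥ 1 be an integer. There exists a constant C > 0, depending only on s and d, such that for all smooth functions f, g : ℝ^d → ℝ and every multi-index α with |α| ≤ s, sup_{x ∈ ℝ^d} ‖D^α(fg)‖_{L²(B_1(x))} ≤ C ( ‖f‖_{L^∞} · ∑_{|β| ≤ s} sup_{x} ‖D^β g‖_{L²(B_1(x))} + ‖g‖_{L^∞} · ∑_{|β| ≤ s} sup_{x} ‖D^β f‖_{L²(B_1(x))} ) (an inequality of extended nonnegative reals). -/

import Mathlib

open MeasureTheory Metric
open scoped ENNReal

noncomputable section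

/-- The partial derivative in the `i`-th coordinate direction. -/
def pd {d : ℕ} {F : Type*} [NormedAddCommGroup F] [NormedSpace ℝ F]
    (i : Fin d) (f : EuclideanSpace ℝ (Fin d) → F) : EuclideanSpace ℝ (Fin d) → F :=
  fun x => fderiv ℝ f x (EuclideanSpace.single i 1)

/-- The partial derivative `D^α` associated with a multi-index `α`. -/
def Dm {d : ℕ} {F : Type*} [NormedAddCommGroup F] [NormedSpace ℝ F]
    (α : Fin d → ℕ) (f : EuclideanSpace ℝ (Fin d) → F) : EuclideanSpace ℝ (Fin d) → F :=
  (List.finRange d).foldr (fun i g => (pd i)^[α i] g) f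

/-- The finite set of multi-indices `α` on `ℝ^d` with `|α| ≤ s`. -/
def mSet (d s : ℕ) : Finset (Fin d → ℕ) :=
  (Finset.Iic (fun _ => s : Fin d → ℕ)).filter fun α => (∑ i, α i) ≤ s

/-- The uniformly local Sobolev norm
`‖f‖_{H^s_ul} = ∑_{|α| ≤ s} sup_x ‖D^α f‖_{L²(B₁(x))}`. -/
def ulSobolev (d s : ℕ) {F : Type*} [NormedAddCommGroup F] [NormedSpace ℝ F]
    (f : EuclideanSpace ℝ (Fin d) → F) : ℝ≥0∞ :=
  ∑ α ∈ mSet d s, ⨆ x : EuclideanSpace ℝ (Fin d),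
    eLpNorm (Dm α f) 2 (volume.restrict (ball x 1))

/-!
Integrating `|∂ᵥh|^(q - 2) ∂ᵥh · ∂ᵥh` by parts moves a derivative off one factor, and Hölder's
inequality then gives `‖D^(j+1) f‖² ≤ C ‖D^j f‖ ‖D^(j+2) f‖` for compactly supported `f`, where
`D^j f` is measured in `L^(c/j)`. So `j ↦ ‖D^j f‖_{L^(c/j)}` is log-convex up to constants, which is
the Gagliardo-Nirenberg interpolation of `D^j f` between `f` in `L^∞` and `D^k f` in `L^p`, with
`c = p k`. The exponents in the Leibniz expansion of `D^k (f g)` match, so Hölder's inequality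
bounds each term by `(‖f‖_∞ ‖D^k g‖_p)^(j/k) (‖g‖_∞ ‖D^k f‖_p)^(i/k)` with `i + j = k`.

For general `f` and `g`, multiply both by a bump that is `1` on the ball of radius `1/2` about `x`
and supported in the unit ball about `x`, and cover a unit ball by finitely many half balls.
-/

open scoped NNReal

section PartialDerivatives

theorem fderiv_iteratedFDeriv_apply {𝕜 E F : Type*} [NontriviallyNormedField 𝕜]
    [NormedAddCommGroup E] [NormedSpace 𝕜 E] [NormedAddCommGroup F] [NormedSpace 𝕜 F]
    {f : E → F} {n : ℕ} {x : E} (hf : DifferentiableAt 𝕜 (iteratedFDeriv 𝕜 n f) x)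
    (v : E) (w : Fin n → E) :
    fderiv 𝕜 (fun y => iteratedFDeriv 𝕜 n f y w) x v =
      iteratedFDeriv 𝕜 (n + 1) f x (Fin.cons v w) := by
  rw [iteratedFDeriv_succ_apply_left, Fin.cons_zero, Fin.tail_cons]
  exact congrArg (· v)
    ((ContinuousMultilinearMap.apply 𝕜 (fun _ => E) F w).hasFDerivAt.comp x hf.hasFDerivAt).fderiv

variable {d : ℕ} {F : Type*} [NormedAddCommGroup F] [NormedSpace ℝ F]
  {f : EuclideanSpace ℝ (Fin d) → F}

theorem contDiff_pd {n : WithTop ℕ∞} (hf : ContDiff ℝ (n + 1) f) (i : Fin d) :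
    ContDiff ℝ n (pd i f) :=
  (hf.fderiv_right le_rfl).clm_apply contDiff_const

theorem contDiff_foldr_pd {n : ℕ} (w : List (Fin d)) (hf : ContDiff ℝ (n + w.length : ℕ) f) :
    ContDiff ℝ n (w.foldr pd f) := by
  induction w generalizing n with
  | nil => exact hf
  | cons i w ih =>
    refine contDiff_pd (ih (n := n + 1) ?_) i
    rwa [add_right_comm, add_assoc]

theorem pd_comm (hf : ContDiff ℝ 2 f) (i j : Fin d) : pd i (pd j f) = pd j (pd i f) := by
  ext x
  have hdiff : DifferentiableAt ℝ (fderiv ℝ f) x :=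
    (hf.fderiv_right (m := 1) (by norm_num)).differentiable one_ne_zero x
  have hpd (k l : Fin d) : pd k (pd l f) x =
      fderiv ℝ (fderiv ℝ f) x (EuclideanSpace.single k 1) (EuclideanSpace.single l 1) :=
    congrArg (· (EuclideanSpace.single k 1)) (hdiff.hasFDerivAt.clm_apply
      (hasFDerivAt_const (EuclideanSpace.single l (1 : ℝ)) x)).fderiv |>.trans (by simp)
  rw [hpd, hpd, (hf.contDiffAt.isSymmSndFDerivAt (by simp)).eq]

theorem foldr_pd_eq_of_perm {v w : List (Fin d)} (h : v.Perm w) (hf : ContDiff ℝ v.length f) :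
    v.foldr pd f = w.foldr pd f := by
  induction h with
  | nil => rfl
  | cons i _ ih => exact congrArg (pd i) (ih (hf.of_le (by simp)))
  | swap i j w => exact pd_comm (contDiff_foldr_pd (n := 2) w (add_comm 2 w.length ▸ hf)) j i
  | trans h _ ih₁ ih₂ => exact (ih₁ hf).trans (ih₂ (h.length_eq ▸ hf))

theorem foldr_pd_ofFn {n : ℕ} (hf : ContDiff ℝ n f) (i : Fin n → Fin d)
    (x : EuclideanSpace ℝ (Fin d)) :
    (List.ofFn i).foldr pd f x =
      iteratedFDeriv ℝ n f x fun k => EuclideanSpace.single (i k) 1 := by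
  induction n generalizing x with
  | zero => simp
  | succ n ih =>
    have hdiff := hf.differentiable_iteratedFDeriv (m := n) (by exact_mod_cast n.lt_succ_self)
    rw [List.ofFn_succ, List.foldr_cons, pd,
      funext (ih (hf.of_le (by exact_mod_cast n.le_succ)) fun k => i k.succ),
      fderiv_iteratedFDeriv_apply (hdiff x)]
    congr 1
    ext1 k
    cases k using Fin.cases <;> rfl

/-- The nondecreasing word in which the letter `i` occurs `α i` times; `Dm α` differentiates along
its letters. -/
def multiIndexWord (α : Fin d → ℕ) : List (Fin d) :=
  (List.finRange d).flatMap fun i => List.replicate (α i) i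

theorem length_multiIndexWord (α : Fin d → ℕ) : (multiIndexWord α).length = ∑ i, α i := by
  simp [multiIndexWord, List.length_flatMap, ← List.ofFn_eq_map, List.sum_ofFn]

theorem count_multiIndexWord (α : Fin d → ℕ) (i : Fin d) :
    (multiIndexWord α).count i = α i := by
  simp [multiIndexWord, List.count_flatMap, Function.comp_def, List.count_replicate,
    ← List.ofFn_eq_map, List.sum_ofFn]

theorem Dm_eq_foldr_pd (α : Fin d → ℕ) : Dm α f = (multiIndexWord α).foldr pd f := by
  have hpow (n : ℕ) (i : Fin d) (g : EuclideanSpace ℝ (Fin d) → F) :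
      (pd i)^[n] g = (List.replicate n i).foldr pd g := by
    induction n with
    | zero => rfl
    | succ n ih => rw [Function.iterate_succ_apply', ih]; rfl
  simp only [Dm, multiIndexWord, List.foldr_flatMap, hpow]

theorem Dm_count_eq_foldr_pd (w : List (Fin d)) (hf : ContDiff ℝ w.length f) :
    Dm (fun i => w.count i) f = w.foldr pd f := by
  rw [Dm_eq_foldr_pd, foldr_pd_eq_of_perm (List.perm_iff_count.2 fun i => ?_) hf]
  rw [count_multiIndexWord]

theorem norm_Dm_le_norm_iteratedFDeriv (α : Fin d → ℕ) (hf : ContDiff ℝ (∑ i, α i : ℕ) f)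
    (x : EuclideanSpace ℝ (Fin d)) : ‖Dm α f x‖ ≤ ‖iteratedFDeriv ℝ (∑ i, α i) f x‖ := by
  rw [← length_multiIndexWord] at hf ⊢
  have hword := foldr_pd_ofFn hf (multiIndexWord α).get x
  rw [List.ofFn_get, ← Dm_eq_foldr_pd] at hword
  rw [hword]
  simpa using (iteratedFDeriv ℝ (multiIndexWord α).length f x).le_opNorm
    fun k => EuclideanSpace.single ((multiIndexWord α).get k) 1

theorem exists_enorm_le_mul_sum_basis {E ι : Type*} [NormedAddCommGroup E] [NormedSpace ℝ E]
    [Fintype ι] (b : Module.Basis ι ℝ E) (n : ℕ) :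
    ∃ C : ℝ≥0, ∀ M : ContinuousMultilinearMap ℝ (fun _ : Fin n => E) F,
      ‖M‖ₑ ≤ C * ∑ i : Fin n → ι, ‖M fun k => b (i k)‖ₑ := by
  have := b.finiteDimensional_of_finite
  set K : ℝ≥0 := ‖(b.equivFunL : E →L[ℝ] ι → ℝ)‖₊
  have hcoord (v : E) (i : ι) : ‖b.repr v i‖ ≤ K * ‖v‖ :=
    (norm_le_pi_norm (b.equivFun v) i).trans ((b.equivFunL : E →L[ℝ] ι → ℝ).le_opNorm v)
  refine ⟨K ^ n, fun M => ?_⟩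
  suffices ‖M‖ ≤ K ^ n * ∑ i : Fin n → ι, ‖M fun k => b (i k)‖ by
    simp only [enorm_eq_nnnorm]
    norm_cast
    exact NNReal.coe_le_coe.1 (by push_cast; exact this)
  refine M.opNorm_le_bound (by positivity) fun v => ?_
  calc ‖M v‖ = ‖∑ i : Fin n → ι, (∏ k, b.repr (v k) (i k)) • M fun k => b (i k)‖ := by
        have hv : v = fun k => ∑ i, b.repr (v k) i • b i := funext fun k => (b.sum_repr (v k)).symm
        conv_lhs => rw [hv, M.map_sum]
        simp_rw [M.map_smul_univ]
    _ ≤ ∑ i : Fin n → ι, (∏ k, K * ‖v k‖) * ‖M fun k => b (i k)‖ := by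
        refine norm_sum_le_of_le _ fun i _ => ?_
        rw [norm_smul, norm_prod]
        gcongr
        exact hcoord ..
    _ = _ := by
        rw [← Finset.mul_sum, Finset.prod_mul_distrib]
        simp [mul_right_comm]

theorem exists_enorm_iteratedFDeriv_le_mul_sum_Dm (d n : ℕ) (F : Type*) [NormedAddCommGroup F]
    [NormedSpace ℝ F] :
    ∃ C : ℝ≥0, ∀ f : EuclideanSpace ℝ (Fin d) → F, ContDiff ℝ n f → ∀ x,
      ‖iteratedFDeriv ℝ n f x‖ₑ ≤
        C * ∑ i : Fin n → Fin d, ‖Dm (fun l => (List.ofFn i).count l) f x‖ₑ := by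
  obtain ⟨C, hC⟩ := exists_enorm_le_mul_sum_basis (F := F)
    (EuclideanSpace.basisFun (Fin d) ℝ).toBasis n
  refine ⟨C, fun f hf x => (hC _).trans_eq ?_⟩
  congr! 3 with i
  rw [Dm_count_eq_foldr_pd _ (by simpa using hf), foldr_pd_ofFn hf]
  simp

theorem mem_mSet {s : ℕ} {α : Fin d → ℕ} : α ∈ mSet d s ↔ ∑ i, α i ≤ s := by
  rw [mSet, Finset.mem_filter, Finset.mem_Iic, and_iff_right_iff_imp]
  exact fun h i => (Finset.single_le_sum (fun _ _ => Nat.zero_le _) (Finset.mem_univ i)).trans h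

theorem count_mem_mSet {s : ℕ} {w : List (Fin d)} (hw : w.length ≤ s) :
    (fun i => w.count i) ∈ mSet d s :=
  mem_mSet.2 <| by
    simpa using (Multiset.sum_count_eq_card (m := (w : Multiset (Fin d)))
      fun i _ => Finset.mem_univ i).trans_le hw

end PartialDerivatives

section LogConvex

variable {R : Type*} [CommSemiring R] [LinearOrder R] [IsStrictOrderedRing R] {a : ℕ → R} {k : ℕ}

theorem pow_succ_le_mul_pow_of_sq_le (ha : ∀ j, 0 ≤ a j)
    (h : ∀ j, j + 2 ≤ k → a (j + 1) ^ 2 ≤ a j * a (j + 2)) {j : ℕ} (hj : j + 1 ≤ k) :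
    a j ^ (j + 1) ≤ a 0 * a (j + 1) ^ j := by
  induction j with
  | zero => simp
  | succ j ih =>
    rcases (ha (j + 1)).eq_or_lt with hzero | hpos
    · rw [← hzero, zero_pow (by omega)]
      exact mul_nonneg (ha 0) (pow_nonneg (ha _) _)
    refine le_of_mul_le_mul_left ?_ (pow_pos hpos j)
    calc a (j + 1) ^ j * a (j + 1) ^ (j + 1 + 1) = (a (j + 1) ^ 2) ^ (j + 1) := by ring
      _ ≤ (a j * a (j + 2)) ^ (j + 1) := by gcongr; exact h j hj
      _ = a j ^ (j + 1) * a (j + 2) ^ (j + 1) := mul_pow ..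
      _ ≤ a 0 * a (j + 1) ^ j * a (j + 2) ^ (j + 1) := by
        gcongr
        · exact pow_nonneg (ha _) _
        · exact ih (by omega)
      _ = a (j + 1) ^ j * (a 0 * a (j + 2) ^ (j + 1)) := by ring

theorem pow_le_mul_pow_of_sq_le (ha : ∀ j, 0 ≤ a j)
    (h : ∀ j, j + 2 ≤ k → a (j + 1) ^ 2 ≤ a j * a (j + 2)) {j : ℕ} (hj : j ≤ k) :
    a j ^ k ≤ a 0 ^ (k - j) * a k ^ j := by
  induction k, hj using Nat.le_induction with
  | base => simp
  | succ k hjk ih =>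
    rcases k.eq_zero_or_pos with rfl | hk
    · obtain rfl : j = 0 := by omega
      simp
    refine le_of_pow_le_pow_left₀ hk.ne' (mul_nonneg (pow_nonneg (ha _) _) (pow_nonneg (ha _) _)) ?_
    have hlast : a k ^ (k + 1) ≤ a 0 * a (k + 1) ^ k := pow_succ_le_mul_pow_of_sq_le ha h le_rfl
    calc (a j ^ (k + 1)) ^ k = (a j ^ k) ^ (k + 1) := pow_right_comm ..
      _ ≤ (a 0 ^ (k - j) * a k ^ j) ^ (k + 1) := by
        gcongr
        · exact pow_nonneg (ha _) _
        · exact ih fun i hi => h i (by omega)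
      _ = (a 0 ^ (k - j)) ^ (k + 1) * (a k ^ (k + 1)) ^ j := by
        rw [mul_pow, pow_right_comm (a k)]
      _ ≤ (a 0 ^ (k - j)) ^ (k + 1) * (a 0 * a (k + 1) ^ k) ^ j := by
        gcongr
        · exact pow_nonneg (pow_nonneg (ha _) _) _
        · exact pow_nonneg (ha _) _
      _ = (a 0 ^ (k + 1 - j) * a (k + 1) ^ j) ^ k := by
        obtain ⟨i, rfl⟩ := Nat.exists_eq_add_of_le hjk
        rw [Nat.add_sub_cancel_left, Nat.add_assoc, Nat.add_sub_cancel_left]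
        ring

-- `L ^ j ^ 2 * a j` is genuinely log-convex.
theorem pow_le_mul_pow_of_sq_le_mul {L : R} (hL : 1 ≤ L) (ha : ∀ j, 0 ≤ a j)
    (h : ∀ j, j + 2 ≤ k → a (j + 1) ^ 2 ≤ L ^ 2 * (a j * a (j + 2))) {j : ℕ} (hj : j ≤ k) :
    a j ^ k ≤ (L ^ (k * j)) ^ k * (a 0 ^ (k - j) * a k ^ j) := by
  have hL0 : 0 ≤ L := zero_le_one.trans hL
  have hconvex := pow_le_mul_pow_of_sq_le (a := fun j => L ^ j ^ 2 * a j) (k := k)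
    (fun j => mul_nonneg (pow_nonneg hL0 _) (ha j)) (fun i hi => ?_) hj
  · calc a j ^ k ≤ (L ^ j ^ 2 * a j) ^ k :=
          pow_le_pow_left₀ (ha j) (le_mul_of_one_le_left (ha j) (one_le_pow₀ hL)) k
      _ ≤ (L ^ 0 ^ 2 * a 0) ^ (k - j) * (L ^ k ^ 2 * a k) ^ j := hconvex
      _ = (L ^ (k * j)) ^ k * (a 0 ^ (k - j) * a k ^ j) := by ring
  · calc (L ^ (i + 1) ^ 2 * a (i + 1)) ^ 2 = L ^ (2 * (i + 1) ^ 2) * a (i + 1) ^ 2 := by ring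
      _ ≤ L ^ (2 * (i + 1) ^ 2) * (L ^ 2 * (a i * a (i + 2))) := by gcongr; exact h i hi
      _ = L ^ i ^ 2 * a i * (L ^ (i + 2) ^ 2 * a (i + 2)) := by ring

end LogConvex

section GagliardoNirenberg

theorem eLpNorm_iteratedFDeriv_zero {E F : Type*} [NormedAddCommGroup E] [NormedSpace ℝ E]
    [MeasurableSpace E] [NormedAddCommGroup F] [NormedSpace ℝ F] {μ : Measure E} {f : E → F}
    {p : ℝ≥0∞} : eLpNorm (iteratedFDeriv ℝ 0 f) p μ = eLpNorm f p μ :=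
  eLpNorm_congr_norm_ae (.of_forall fun _ => norm_iteratedFDeriv_zero)

theorem hasDerivAt_abs_rpow_mul_self {p : ℝ} (hp : 0 ≤ p) (t : ℝ) :
    HasDerivAt (fun t : ℝ => |t| ^ p * t) ((p + 1) * |t| ^ p) t := by
  rcases eq_or_ne t 0 with rfl | ht
  · rw [hasDerivAt_iff_tendsto_slope_zero]
    rcases hp.eq_or_lt with rfl | hp
    · refine tendsto_nhds_of_eventually_eq (eventually_nhdsWithin_of_forall fun t ht => ?_)
      simpa using inv_mul_cancel₀ ht
    have hlim : Filter.Tendsto (fun t : ℝ => |t| ^ p) (nhdsWithin 0 {0}ᶜ) (nhds (|0| ^ p)) :=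
      ((continuous_abs.rpow_const fun _ => Or.inr hp.le).tendsto 0).mono_left nhdsWithin_le_nhds
    simp only [abs_zero, Real.zero_rpow hp.ne', mul_zero] at hlim ⊢
    refine hlim.congr' (eventually_nhdsWithin_of_forall fun t (ht : t ≠ 0) => ?_)
    simp only [zero_add, sub_zero, smul_eq_mul]
    field_simp
  · have habs := ((hasDerivAt_abs ht).rpow_const (p := p) (Or.inl (abs_ne_zero.2 ht))).mul
      (hasDerivAt_id t)
    refine habs.congr_deriv ?_
    have hpow : |t| ^ p = |t| ^ (p - 1) * |t| := by
      rw [← Real.rpow_add_one (abs_ne_zero.2 ht), sub_add_cancel]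
    have hsign : (SignType.sign t : ℝ) * t = |t| := sign_mul_self t
    rw [hpow, ← hsign, id]
    ring

variable {E : Type*} [NormedAddCommGroup E] [NormedSpace ℝ E] [FiniteDimensional ℝ E]

theorem exists_basis_norm_eq_one (E : Type*) [NormedAddCommGroup E] [NormedSpace ℝ E]
    [FiniteDimensional ℝ E] :
    ∃ b : Module.Basis (Fin (Module.finrank ℝ E)) ℝ E, ∀ i, ‖b i‖ = 1 := by
  set b := Module.finBasis ℝ E
  refine ⟨b.isUnitSMul (w := fun i => ‖b i‖⁻¹) fun i => ?_, fun i => ?_⟩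
  · exact (inv_ne_zero (norm_ne_zero_iff.2 (b.ne_zero i))).isUnit
  · rw [b.isUnitSMul_apply]
    exact norm_smul_inv_norm (𝕜 := ℝ) (b.ne_zero i)

variable [MeasurableSpace E] [BorelSpace E] {μ : Measure E}

theorem integral_abs_fderiv_rpow_mul_sq [μ.IsAddHaarMeasure] {u : E → ℝ} (hu : ContDiff ℝ 2 u)
    (hc : HasCompactSupport u) (v : E) {p : ℝ} (hp : 0 ≤ p) :
    ∫ x, |fderiv ℝ u x v| ^ p * fderiv ℝ u x v ^ 2 ∂μ =
      -∫ x, (p + 1) * (u x * fderiv ℝ (fun y => fderiv ℝ u y v) x v *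
        |fderiv ℝ u x v| ^ p) ∂μ := by
  set w : E → ℝ := fun y => fderiv ℝ u y v
  have hw : ContDiff ℝ 1 w := (hu.fderiv_right (by norm_num)).clm_apply contDiff_const
  have hpow : Continuous fun x => |w x| ^ p := hw.continuous.abs.rpow_const fun _ => Or.inr hp
  have hderiv (x) : HasFDerivAt (fun x => |w x| ^ p * w x)
      (((p + 1) * |w x| ^ p) • fderiv ℝ w x) x :=
    (hasDerivAt_abs_rpow_mul_self hp _).comp_hasFDerivAt x
      (hw.differentiable one_ne_zero x).hasFDerivAt
  have hparts : ∫ x, |w x| ^ p * w x * w x ∂μ =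
      -∫ x, fderiv ℝ (fun x => |w x| ^ p * w x) x v * u x ∂μ := by
    refine integral_mul_fderiv_eq_neg_fderiv_mul_of_integrable ?_ ?_ ?_
      (fun x _ => (hderiv x).differentiableAt) fun x _ => hu.differentiable two_ne_zero x
    · simp only [(hderiv _).fderiv, smul_apply, smul_eq_mul]
      refine Continuous.integrable_of_hasCompactSupport ?_ hc.mul_left
      exact ((continuous_const.mul hpow).mul
        ((hw.continuous_fderiv one_ne_zero).clm_apply continuous_const)).mul hu.continuous
    · exact ((hpow.mul hw.continuous).mul hw.continuous).integrable_of_hasCompactSupport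
        (hc.fderiv_apply ℝ v).mul_left
    · exact ((hpow.mul hw.continuous).mul hu.continuous).integrable_of_hasCompactSupport
        hc.mul_left
  calc ∫ x, |w x| ^ p * w x ^ 2 ∂μ = ∫ x, |w x| ^ p * w x * w x ∂μ := by
        simp only [sq, mul_assoc]
    _ = -∫ x, fderiv ℝ (fun x => |w x| ^ p * w x) x v * u x ∂μ := hparts
    _ = _ := by
        refine congrArg Neg.neg (integral_congr_ae (.of_forall fun x => ?_))
        simp only [(hderiv x).fderiv, smul_apply, smul_eq_mul]
        ring

theorem lintegral_enorm_fderiv_rpow_le [μ.IsAddHaarMeasure] {u : E → ℝ} (hu : ContDiff ℝ 2 u)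
    (hc : HasCompactSupport u) (v : E) {p : ℝ} (hp : 0 ≤ p) :
    ∫⁻ x, ‖fderiv ℝ u x v‖ₑ ^ (p + 2) ∂μ ≤
      ENNReal.ofReal (p + 1) * ∫⁻ x, ‖u x‖ₑ * ‖fderiv ℝ (fun y => fderiv ℝ u y v) x v‖ₑ *
        ‖fderiv ℝ u x v‖ₑ ^ p ∂μ := by
  set w : E → ℝ := fun y => fderiv ℝ u y v
  have hw : Continuous w := (hu.continuous_fderiv two_ne_zero).clm_apply continuous_const
  have hint : Integrable (fun x => |w x| ^ p * w x ^ 2) μ := by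
    refine Continuous.integrable_of_hasCompactSupport ?_
      ((hc.fderiv_apply ℝ v).comp_left (g := (· ^ 2)) (zero_pow two_ne_zero)).mul_left
    exact (hw.abs.rpow_const fun _ => Or.inr hp).mul (hw.pow 2)
  have hnonneg (x) : 0 ≤ |w x| ^ p * w x ^ 2 := by positivity
  calc ∫⁻ x, ‖w x‖ₑ ^ (p + 2) ∂μ = ∫⁻ x, ENNReal.ofReal (|w x| ^ p * w x ^ 2) ∂μ := by
        refine lintegral_congr fun x => ?_
        rw [Real.enorm_eq_ofReal_abs, ENNReal.ofReal_rpow_of_nonneg (abs_nonneg _) (by positivity),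
          Real.rpow_add_of_nonneg (abs_nonneg _) hp zero_le_two, Real.rpow_two, sq_abs]
    _ = ENNReal.ofReal (∫ x, |w x| ^ p * w x ^ 2 ∂μ) :=
        (ofReal_integral_eq_lintegral_ofReal hint (.of_forall hnonneg)).symm
    _ = ‖∫ x, (p + 1) * (u x * fderiv ℝ w x v * |w x| ^ p) ∂μ‖ₑ := by
        rw [← Real.enorm_of_nonneg (integral_nonneg hnonneg),
          integral_abs_fderiv_rpow_mul_sq hu hc v hp, enorm_neg]
    _ ≤ ∫⁻ x, ‖(p + 1) * (u x * fderiv ℝ w x v * |w x| ^ p)‖ₑ ∂μ :=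
        enorm_integral_le_lintegral_enorm _
    _ = _ := by
        rw [← lintegral_const_mul' _ _ ENNReal.ofReal_ne_top]
        refine lintegral_congr fun x => ?_
        rw [enorm_mul, enorm_mul, enorm_mul, Real.enorm_of_nonneg (by positivity : 0 ≤ p + 1),
          Real.enorm_rpow_of_nonneg (abs_nonneg _) hp, Real.enorm_abs]

theorem lintegral_enorm_iteratedFDeriv_apply_rpow_le [μ.IsAddHaarMeasure] {f : E → ℝ} {m : ℕ}
    (hf : ContDiff ℝ (m + 2 : ℕ) f) (hc : HasCompactSupport f) {v : Fin (m + 1) → E}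
    (hv : ∀ k, ‖v k‖ ≤ 1) {p : ℝ} (hp : 0 ≤ p) :
    ∫⁻ x, ‖iteratedFDeriv ℝ (m + 1) f x v‖ₑ ^ (p + 2) ∂μ ≤
      ENNReal.ofReal (p + 1) * ∫⁻ x, ‖iteratedFDeriv ℝ m f x‖ₑ *
        ‖iteratedFDeriv ℝ (m + 2) f x‖ₑ * ‖iteratedFDeriv ℝ (m + 1) f x‖ₑ ^ p ∂μ := by
  have happly_le (n : ℕ) (x : E) {w : Fin n → E} (hw : ∀ k, ‖w k‖ ≤ 1) :
      ‖iteratedFDeriv ℝ n f x w‖ₑ ≤ ‖iteratedFDeriv ℝ n f x‖ₑ :=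
    enorm_le_iff_norm_le.2 <| ((iteratedFDeriv ℝ n f x).le_opNorm w).trans <|
      mul_le_of_le_one_right (norm_nonneg _) (Finset.prod_le_one (by simp) fun k _ => hw k)
  set u : E → ℝ := fun y => iteratedFDeriv ℝ m f y (Fin.tail v)
  have hu : ContDiff ℝ 2 u :=
    (ContinuousMultilinearMap.apply ℝ (fun _ => E) ℝ (Fin.tail v)).contDiff.comp
      (hf.iteratedFDeriv_right (by norm_cast; omega))
  have huc : HasCompactSupport u :=
    HasCompactSupport.comp_left
      (g := fun M : ContinuousMultilinearMap ℝ (fun _ : Fin m => E) ℝ => M (Fin.tail v))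
      (hc.iteratedFDeriv m) rfl
  have hu' (x) : fderiv ℝ u x (v 0) = iteratedFDeriv ℝ (m + 1) f x v := by
    rw [fderiv_iteratedFDeriv_apply (hf.differentiable_iteratedFDeriv (by norm_cast; omega) x),
      Fin.cons_self_tail]
  have hu'' (x) : fderiv ℝ (fun y => iteratedFDeriv ℝ (m + 1) f y v) x (v 0) =
      iteratedFDeriv ℝ (m + 2) f x (Fin.cons (v 0) v) :=
    fderiv_iteratedFDeriv_apply (hf.differentiable_iteratedFDeriv (by norm_cast; omega) x) ..
  have hle := lintegral_enorm_fderiv_rpow_le (μ := μ) hu huc (v 0) hp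
  simp only [hu', hu''] at hle
  refine hle.trans ?_
  gcongr with x
  · exact happly_le _ _ fun k => hv _
  · exact happly_le _ _ (Fin.cases (hv 0) hv)
  · exact happly_le _ _ hv

theorem exists_lintegral_enorm_iteratedFDeriv_rpow_le (μ : Measure E) [μ.IsAddHaarMeasure]
    (m : ℕ) {p : ℝ} (hp : 0 ≤ p) :
    ∃ C : ℝ≥0, ∀ f : E → ℝ, ContDiff ℝ (m + 2 : ℕ) f → HasCompactSupport f →
      ∫⁻ x, ‖iteratedFDeriv ℝ (m + 1) f x‖ₑ ^ (p + 2) ∂μ ≤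
        C * ∫⁻ x, ‖iteratedFDeriv ℝ m f x‖ₑ * ‖iteratedFDeriv ℝ (m + 2) f x‖ₑ *
          ‖iteratedFDeriv ℝ (m + 1) f x‖ₑ ^ p ∂μ := by
  obtain ⟨b, hb⟩ := exists_basis_norm_eq_one E
  obtain ⟨K, hK⟩ := exists_enorm_le_mul_sum_basis (F := ℝ) b (m + 1)
  set N := Fintype.card (Fin (m + 1) → Fin (Module.finrank ℝ E))
  refine ⟨K ^ (p + 2) * N ^ (p + 1) * (N * (p + 1).toNNReal), fun f hf hc => ?_⟩
  set D := iteratedFDeriv ℝ (m + 1) f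
  set J := ∫⁻ x, ‖iteratedFDeriv ℝ m f x‖ₑ * ‖iteratedFDeriv ℝ (m + 2) f x‖ₑ * ‖D x‖ₑ ^ p ∂μ
  have hD : Continuous D := hf.continuous_iteratedFDeriv (by norm_cast; omega)
  have hpow (x : E) : ‖D x‖ₑ ^ (p + 2) ≤ ↑(K ^ (p + 2) * N ^ (p + 1) : ℝ≥0) *
      ∑ i : Fin (m + 1) → Fin (Module.finrank ℝ E), ‖D x fun k => b (i k)‖ₑ ^ (p + 2) := by
    refine (ENNReal.rpow_le_rpow (hK (D x)) (by positivity)).trans ?_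
    push_cast [ENNReal.mul_rpow_of_nonneg _ _ (by positivity : 0 ≤ p + 2),
      ENNReal.coe_rpow_of_nonneg _ (by positivity : 0 ≤ p + 2),
      ENNReal.coe_rpow_of_nonneg _ (by positivity : 0 ≤ p + 1)]
    rw [mul_assoc]
    gcongr
    refine (ENNReal.rpow_sum_le_const_mul_sum_rpow _ _ (by linarith)).trans_eq ?_
    rw [Finset.card_univ, add_sub_assoc, show (2 - 1 : ℝ) = 1 by norm_num]
  calc ∫⁻ x, ‖D x‖ₑ ^ (p + 2) ∂μ
      ≤ ∫⁻ x, ↑(K ^ (p + 2) * N ^ (p + 1) : ℝ≥0) *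
          ∑ i : Fin (m + 1) → Fin (Module.finrank ℝ E), ‖D x fun k => b (i k)‖ₑ ^ (p + 2) ∂μ :=
        lintegral_mono hpow
    _ = ↑(K ^ (p + 2) * N ^ (p + 1) : ℝ≥0) * ∑ i : Fin (m + 1) → Fin (Module.finrank ℝ E),
          ∫⁻ x, ‖D x fun k => b (i k)‖ₑ ^ (p + 2) ∂μ := by
        rw [lintegral_const_mul' _ _ ENNReal.coe_ne_top, lintegral_finsetSum]
        exact fun i _ => (((ContinuousMultilinearMap.apply ℝ (fun _ => E) ℝ
          fun k => b (i k)).continuous.comp hD).enorm.measurable.pow_const _)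
    _ ≤ ↑(K ^ (p + 2) * N ^ (p + 1) : ℝ≥0) * ∑ _i : Fin (m + 1) → Fin (Module.finrank ℝ E),
          ENNReal.ofReal (p + 1) * J := by
        gcongr
        exact lintegral_enorm_iteratedFDeriv_apply_rpow_le hf hc (fun k => (hb _).le) hp
    _ = _ := by
        rw [Finset.sum_const, Finset.card_univ, nsmul_eq_mul, ENNReal.ofReal]
        push_cast
        ring

variable {α F G : Type*} [MeasurableSpace α] {ν : Measure α} [NormedAddCommGroup F]
  [NormedAddCommGroup G]

theorem lintegral_enorm_mul_rpow_le {u : α → F} {h : α → G} {q : ℝ} (hq : 2 < q)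
    (hu : AEStronglyMeasurable u ν) (hh : AEStronglyMeasurable h ν) :
    ∫⁻ x, ‖u x‖ₑ * ‖h x‖ₑ ^ (q - 2) ∂ν ≤ eLpNorm' u (q / 2) ν * eLpNorm' h q ν ^ (q - 2) := by
  have hq' : 0 < q - 2 := by linarith
  have hconj : (q / 2).HolderConjugate (q / (q - 2)) := by
    rw [Real.holderConjugate_iff]
    constructor
    · linarith
    · field_simp
      ring
  refine (ENNReal.lintegral_mul_le_Lp_mul_Lq ν hconj hu.enorm
    (hh.enorm.pow_const (q - 2))).trans_eq ?_
  simp only [eLpNorm', ← ENNReal.rpow_mul]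
  congr 3 <;> field_simp

theorem eLpNorm_sq_le_of_lintegral_le {u : α → F} {h : α → G} {q K : ℝ≥0∞} (hq : 2 < q)
    (hq_top : q ≠ ⊤) (hu : AEStronglyMeasurable u ν) (hh : AEStronglyMeasurable h ν)
    (hfin : eLpNorm h q ν ≠ ⊤)
    (hle : ∫⁻ x, ‖h x‖ₑ ^ q.toReal ∂ν ≤ K * ∫⁻ x, ‖u x‖ₑ * ‖h x‖ₑ ^ (q.toReal - 2) ∂ν) :
    eLpNorm h q ν ^ 2 ≤ K * eLpNorm u (q / 2) ν := by
  have hr : 2 < q.toReal := (ENNReal.toReal_lt_toReal ENNReal.ofNat_ne_top hq_top).2 hq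
  have hq0 : q ≠ 0 := (zero_lt_two.trans hq).ne'
  rw [eLpNorm_eq_eLpNorm' hq0 hq_top] at hfin ⊢
  rw [eLpNorm_eq_eLpNorm' (by simp [hq0]) (by simp [hq_top, ENNReal.div_eq_top]),
    ENNReal.toReal_div, ENNReal.toReal_ofNat]
  rcases eq_or_ne (eLpNorm' h q.toReal ν) 0 with hzero | hpos
  · simp [hzero]
  refine (ENNReal.mul_le_mul_iff_left (ENNReal.rpow_pos (pos_iff_ne_zero.2 hpos) hfin).ne'
    (ENNReal.rpow_ne_top_of_nonneg (y := q.toReal - 2) (by linarith) hfin)).1 ?_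
  calc eLpNorm' h q.toReal ν ^ 2 * eLpNorm' h q.toReal ν ^ (q.toReal - 2)
      = ∫⁻ x, ‖h x‖ₑ ^ q.toReal ∂ν := by
        rw [← ENNReal.rpow_two, ← ENNReal.rpow_add _ _ hpos hfin, add_sub_cancel,
          lintegral_rpow_enorm_eq_rpow_eLpNorm' (by linarith)]
    _ ≤ K * (eLpNorm' u (q.toReal / 2) ν * eLpNorm' h q.toReal ν ^ (q.toReal - 2)) :=
        hle.trans (by gcongr; exact lintegral_enorm_mul_rpow_le hr hu hh)
    _ = _ := (mul_assoc ..).symm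

theorem holderTriple_div {c : ℝ≥0∞} (hc : c ≠ 0) (i j : ℕ) :
    ENNReal.HolderTriple (c / i) (c / j) (c / (i + j : ℕ)) where
  inv_add_inv_eq_inv := by
    simp only [ENNReal.inv_div (.inl (ENNReal.natCast_ne_top _)) (.inr hc),
      ENNReal.div_add_div_same, ← Nat.cast_add]

theorem eLpNorm_norm_mul_norm_le {u : α → F} {h : α → G} {p q r : ℝ≥0∞}
    [ENNReal.HolderTriple p q r] (hu : AEStronglyMeasurable u ν) (hh : AEStronglyMeasurable h ν) :
    eLpNorm (fun x => ‖u x‖ * ‖h x‖) r ν ≤ eLpNorm u p ν * eLpNorm h q ν := by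
  simpa using eLpNorm_le_eLpNorm_mul_eLpNorm'_of_norm hu hh (fun a b => ‖a‖ * ‖b‖) 1
    (.of_forall fun x => by simp)

-- At `m = 0` the exponent `c / m` is `⊤`, so that factor is the sup norm of `f`.
theorem exists_eLpNorm_iteratedFDeriv_sq_le (μ : Measure E) [μ.IsAddHaarMeasure] {m : ℕ}
    {c : ℝ≥0∞} (hc : (2 * (m + 1) : ℕ) < c) (hc_top : c ≠ ⊤) :
    ∃ C : ℝ≥0, ∀ f : E → ℝ, ContDiff ℝ (m + 2 : ℕ) f → HasCompactSupport f →
      eLpNorm (iteratedFDeriv ℝ (m + 1) f) (c / (m + 1 : ℕ)) μ ^ 2 ≤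
        C * (eLpNorm (iteratedFDeriv ℝ m f) (c / m) μ *
          eLpNorm (iteratedFDeriv ℝ (m + 2) f) (c / (m + 2 : ℕ)) μ) := by
  set q : ℝ≥0∞ := c / (m + 1 : ℕ)
  have hq_top : q ≠ ⊤ := ENNReal.div_ne_top hc_top (by simp)
  have hq : 2 < q := by
    rw [ENNReal.lt_div_iff_mul_lt (by simp) (by simp)]
    exact_mod_cast hc
  have hr : 0 ≤ q.toReal - 2 :=
    sub_nonneg.2 ((ENNReal.toReal_lt_toReal ENNReal.ofNat_ne_top hq_top).2 hq).le
  obtain ⟨C, hC⟩ := exists_lintegral_enorm_iteratedFDeriv_rpow_le μ m hr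
  refine ⟨C, fun f hf hf_supp => ?_⟩
  have hcont {n : ℕ} (hn : n ≤ m + 2) : Continuous (iteratedFDeriv ℝ n f) :=
    hf.continuous_iteratedFDeriv (by exact_mod_cast hn)
  have hle := hC f hf hf_supp
  rw [sub_add_cancel] at hle
  set u : E → ℝ := fun x => ‖iteratedFDeriv ℝ m f x‖ * ‖iteratedFDeriv ℝ (m + 2) f x‖
  have hu : Continuous u := (hcont (by omega)).norm.mul (hcont le_rfl).norm
  calc eLpNorm (iteratedFDeriv ℝ (m + 1) f) q μ ^ 2 ≤ C * eLpNorm u (q / 2) μ := by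
        refine eLpNorm_sq_le_of_lintegral_le hq hq_top hu.aestronglyMeasurable
          (hcont (by omega)).aestronglyMeasurable ?_ (by simpa [u, enorm_mul] using hle)
        exact ((hcont (by omega)).memLp_of_hasCompactSupport
          (hf_supp.iteratedFDeriv (m + 1))).eLpNorm_ne_top
    _ ≤ _ := by
        have htriple := holderTriple_div (pos_of_gt hc).ne' m (m + 2)
        have hexp : q / 2 = c / (m + (m + 2) : ℕ) := by
          simp only [q, div_eq_mul_inv]
          rw [mul_assoc, ← ENNReal.mul_inv (by simp) (by simp)]
          congr 2
          norm_cast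
          ring
        rw [hexp]
        gcongr
        exact eLpNorm_norm_mul_norm_le (hcont (by omega)).aestronglyMeasurable
          (hcont le_rfl).aestronglyMeasurable

theorem exists_eLpNorm_iteratedFDeriv_pow_le (μ : Measure E) [μ.IsAddHaarMeasure] {p : ℝ≥0∞}
    (hp : 2 ≤ p) (hp_top : p ≠ ⊤) {j k : ℕ} (hj : j ≤ k) (hk : k ≠ 0) :
    ∃ C : ℝ≥0, ∀ f : E → ℝ, ContDiff ℝ k f → HasCompactSupport f →
      eLpNorm (iteratedFDeriv ℝ j f) (p * k / j) μ ^ k ≤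
        C ^ k * (eLpNorm f ⊤ μ ^ (k - j) * eLpNorm (iteratedFDeriv ℝ k f) p μ ^ j) := by
  have hk0 : (k : ℝ≥0∞) ≠ 0 := by exact_mod_cast hk
  have hstep (m : ℕ) (hm : m + 2 ≤ k) := exists_eLpNorm_iteratedFDeriv_sq_le μ (m := m)
    (c := p * k) ?_ (ENNReal.mul_ne_top hp_top (by simp))
  rotate_left
  · calc ((2 * (m + 1) : ℕ) : ℝ≥0∞) < (2 * k : ℕ) := by exact_mod_cast (by omega)
      _ ≤ p * k := by push_cast; gcongr
  choose! K hK using hstep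
  set L : ℝ≥0 := 1 + ∑ m ∈ Finset.range k, K m
  refine ⟨L ^ (k * j), fun f hf hf_supp => ?_⟩
  set X : ℕ → ℝ≥0∞ := fun i => eLpNorm (iteratedFDeriv ℝ i f) (p * k / i) μ
  have hX {i : ℕ} (hi : i ≤ k) : X i ≠ ⊤ :=
    ((hf.continuous_iteratedFDeriv (by exact_mod_cast hi)).memLp_of_hasCompactSupport
      (hf_supp.iteratedFDeriv i)).eLpNorm_ne_top
  have hX0 : X 0 = eLpNorm f ⊤ μ := by
    simp only [X, Nat.cast_zero]
    rw [ENNReal.div_zero (mul_ne_zero (zero_lt_two.trans_le hp).ne' hk0)]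
    exact eLpNorm_iteratedFDeriv_zero
  have hXk : X k = eLpNorm (iteratedFDeriv ℝ k f) p μ := by
    simp only [X, ENNReal.mul_div_cancel_right hk0 (ENNReal.natCast_ne_top k)]
  have hconvex := pow_le_mul_pow_of_sq_le_mul (a := fun i => (X i).toNNReal) (L := L) (k := k)
    (le_add_of_nonneg_right zero_le) (fun _ => zero_le) (fun m hm => ?_) hj
  · rw [← hX0, ← hXk]
    rw [← ENNReal.coe_le_coe] at hconvex
    push_cast [ENNReal.coe_toNNReal (hX hj), ENNReal.coe_toNNReal (hX k.zero_le),
      ENNReal.coe_toNNReal (hX le_rfl)] at hconvex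
    exact_mod_cast hconvex
  · have hKL : K m ≤ L ^ 2 :=
      ((Finset.single_le_sum (fun _ _ => zero_le) (Finset.mem_range.2 (by omega))).trans
        (le_add_of_nonneg_left zero_le)).trans (le_self_pow (le_add_of_nonneg_right zero_le)
          two_ne_zero)
    have hXm := hK m hm f (hf.of_le (by exact_mod_cast hm)) hf_supp
    refine le_trans ?_ (mul_le_mul_of_nonneg_right hKL zero_le)
    rw [← ENNReal.coe_le_coe]
    push_cast [ENNReal.coe_toNNReal (hX (by omega : m ≤ k)),
      ENNReal.coe_toNNReal (hX (by omega : m + 1 ≤ k)), ENNReal.coe_toNNReal (hX hm)]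
    exact_mod_cast hXm

end GagliardoNirenberg

section Product

theorem eLpNorm_le_mul_sum_eLpNorm {α ι F : Type*} {G : ι → Type*} [MeasurableSpace α]
    {ν : Measure α} [NormedAddCommGroup F] [∀ i, NormedAddCommGroup (G i)] {u : α → F}
    {h : ∀ i, α → G i} {s : Finset ι} {C : ℝ≥0} {p : ℝ≥0∞} (hp : 1 ≤ p)
    (hh : ∀ i ∈ s, AEStronglyMeasurable (h i) ν)
    (hle : ∀ x, ‖u x‖ₑ ≤ C * ∑ i ∈ s, ‖h i x‖ₑ) :
    eLpNorm u p ν ≤ C * ∑ i ∈ s, eLpNorm (h i) p ν := by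
  calc eLpNorm u p ν ≤ C * eLpNorm (∑ i ∈ s, fun x => ‖h i x‖ₑ) p ν :=
        eLpNorm_le_mul_eLpNorm_of_ae_le_mul' (.of_forall fun x => by simpa using hle x) p
    _ ≤ C * ∑ i ∈ s, eLpNorm (fun x => ‖h i x‖ₑ) p ν := by
        gcongr
        exact eLpNorm_sum_le (fun i hi => (hh i hi).enorm.aestronglyMeasurable) hp
    _ = C * ∑ i ∈ s, eLpNorm (h i) p ν := by simp only [eLpNorm_enorm]

variable {E : Type*} [NormedAddCommGroup E] [NormedSpace ℝ E] {f g : E → ℝ}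

theorem enorm_iteratedFDeriv_mul_le {n : ℕ} (hf : ContDiff ℝ n f) (hg : ContDiff ℝ n g) (x : E) :
    ‖iteratedFDeriv ℝ n (fun y => f y * g y) x‖ₑ ≤ ↑(2 ^ n : ℝ≥0) *
      ∑ i ∈ Finset.range (n + 1), ‖iteratedFDeriv ℝ i f x‖ₑ * ‖iteratedFDeriv ℝ (n - i) g x‖ₑ := by
  simp only [enorm_eq_nnnorm]
  norm_cast
  rw [← NNReal.coe_le_coe]
  push_cast
  refine (norm_iteratedFDeriv_mul_le hf hg x le_rfl).trans ?_
  simp only [Finset.mul_sum, mul_assoc]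
  gcongr with i
  exact_mod_cast Nat.choose_le_two_pow n i

variable [FiniteDimensional ℝ E] [MeasurableSpace E] [BorelSpace E]

theorem exists_eLpNorm_norm_iteratedFDeriv_mul_le (μ : Measure E) [μ.IsAddHaarMeasure]
    {p : ℝ≥0∞} (hp : 2 ≤ p) (hp_top : p ≠ ⊤) {i j k : ℕ} (hk : i + j = k) :
    ∃ C : ℝ≥0, ∀ f g : E → ℝ, ContDiff ℝ k f → ContDiff ℝ k g →
      HasCompactSupport f → HasCompactSupport g →
      eLpNorm (fun x => ‖iteratedFDeriv ℝ i f x‖ * ‖iteratedFDeriv ℝ j g x‖) p μ ≤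
        C * (eLpNorm f ⊤ μ * eLpNorm (iteratedFDeriv ℝ k g) p μ +
          eLpNorm g ⊤ μ * eLpNorm (iteratedFDeriv ℝ k f) p μ) := by
  subst hk
  have hcont {n : ℕ} (hn : n ≤ i + j) {h : E → ℝ} (hh : ContDiff ℝ (i + j : ℕ) h) :
      AEStronglyMeasurable (iteratedFDeriv ℝ n h) μ :=
    (hh.continuous_iteratedFDeriv (by exact_mod_cast hn)).aestronglyMeasurable
  rcases eq_or_ne (i + j) 0 with hk | hk
  · obtain ⟨rfl, rfl⟩ : i = 0 ∧ j = 0 := by omega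
    refine ⟨1, fun f g hf hg _ _ => ?_⟩
    rw [ENNReal.coe_one, one_mul, ← eLpNorm_iteratedFDeriv_zero (f := f) (p := ⊤)]
    exact (eLpNorm_norm_mul_norm_le (hcont le_rfl hf) (hcont le_rfl hg)).trans le_self_add
  have hp0 : p ≠ 0 := (zero_lt_two.trans_le hp).ne'
  have hk0 : ((i + j : ℕ) : ℝ≥0∞) ≠ 0 := by exact_mod_cast hk
  obtain ⟨A, hA⟩ := exists_eLpNorm_iteratedFDeriv_pow_le μ hp hp_top (Nat.le_add_right i j) hk
  obtain ⟨B, hB⟩ := exists_eLpNorm_iteratedFDeriv_pow_le μ hp hp_top (Nat.le_add_left j i) hk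
  simp only [Nat.add_sub_cancel_left, Nat.add_sub_cancel] at hA hB
  have htriple := holderTriple_div (mul_ne_zero hp0 hk0) i j
  rw [ENNReal.mul_div_cancel_right hk0 (ENNReal.natCast_ne_top _)] at htriple
  refine ⟨A * B, fun f g hf hg hf_supp hg_supp => (ENNReal.pow_le_pow_left_iff hk).1 ?_⟩
  set F := eLpNorm f ⊤ μ * eLpNorm (iteratedFDeriv ℝ (i + j) g) p μ
  set G := eLpNorm g ⊤ μ * eLpNorm (iteratedFDeriv ℝ (i + j) f) p μ
  calc eLpNorm (fun x => ‖iteratedFDeriv ℝ i f x‖ * ‖iteratedFDeriv ℝ j g x‖) p μ ^ (i + j)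
      ≤ eLpNorm (iteratedFDeriv ℝ i f) (p * (i + j : ℕ) / i) μ ^ (i + j) *
          eLpNorm (iteratedFDeriv ℝ j g) (p * (i + j : ℕ) / j) μ ^ (i + j) := by
        rw [← mul_pow]
        gcongr
        exact eLpNorm_norm_mul_norm_le (hcont (by omega) hf) (hcont (by omega) hg)
    _ ≤ (A ^ (i + j) * (eLpNorm f ⊤ μ ^ j * eLpNorm (iteratedFDeriv ℝ (i + j) f) p μ ^ i)) *
          (B ^ (i + j) * (eLpNorm g ⊤ μ ^ i * eLpNorm (iteratedFDeriv ℝ (i + j) g) p μ ^ j)) :=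
        mul_le_mul' (hA f hf hf_supp) (hB g hg hg_supp)
    _ = (A * B) ^ (i + j) * (G ^ i * F ^ j) := by
        simp only [F, G, mul_pow]
        ring
    _ ≤ (A * B) ^ (i + j) * ((F + G) ^ i * (F + G) ^ j) := by
        gcongr
        · exact le_add_self
        · exact le_self_add
    _ = (↑(A * B) * (F + G)) ^ (i + j) := by
        rw [ENNReal.coe_mul, ← pow_add, ← mul_pow]

theorem exists_eLpNorm_iteratedFDeriv_mul_le (μ : Measure E) [μ.IsAddHaarMeasure]
    {p : ℝ≥0∞} (hp : 2 ≤ p) (hp_top : p ≠ ⊤) (k : ℕ) :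
    ∃ C : ℝ≥0, ∀ f g : E → ℝ, ContDiff ℝ k f → ContDiff ℝ k g →
      HasCompactSupport f → HasCompactSupport g →
      eLpNorm (iteratedFDeriv ℝ k fun y => f y * g y) p μ ≤
        C * (eLpNorm f ⊤ μ * eLpNorm (iteratedFDeriv ℝ k g) p μ +
          eLpNorm g ⊤ μ * eLpNorm (iteratedFDeriv ℝ k f) p μ) := by
  have hprod (i : ℕ) (hi : i ≤ k) :=
    exists_eLpNorm_norm_iteratedFDeriv_mul_le μ hp hp_top (Nat.add_sub_of_le hi)
  choose! C hC using hprod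
  refine ⟨2 ^ k * ∑ i ∈ Finset.range (k + 1), C i, fun f g hf hg hf_supp hg_supp => ?_⟩
  have hcont {n : ℕ} (hn : n ≤ k) {h : E → ℝ} (hh : ContDiff ℝ k h) :
      Continuous (iteratedFDeriv ℝ n h) :=
    hh.continuous_iteratedFDeriv (by exact_mod_cast hn)
  refine (eLpNorm_le_mul_sum_eLpNorm (one_le_two.trans hp)
    (h := fun i x => ‖iteratedFDeriv ℝ i f x‖ * ‖iteratedFDeriv ℝ (k - i) g x‖) (fun i hi => ?_)
    fun x => by simpa only [enorm_mul, enorm_norm] using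
      enorm_iteratedFDeriv_mul_le hf hg x).trans ?_
  · exact ((hcont (Finset.mem_range_succ_iff.1 hi) hf).norm.mul
      (hcont (Nat.sub_le k i) hg).norm).aestronglyMeasurable
  push_cast
  rw [mul_assoc, Finset.sum_mul]
  gcongr with i hi
  exact hC i (Finset.mem_range_succ_iff.1 hi) f g hf hg hf_supp hg_supp

end Product

section Localization

variable {E : Type*} [NormedAddCommGroup E] [MeasurableSpace E]

/-- The uniformly local `L^p` norm `sup_x ‖f‖_{L^p(B₁(x))}`. -/
def ulLpNorm {F : Type*} [NormedAddCommGroup F] (f : E → F) (p : ℝ≥0∞) (μ : Measure E) : ℝ≥0∞ :=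
  ⨆ x : E, eLpNorm f p (μ.restrict (ball x 1))

theorem eLpNorm_restrict_ball_le_ulLpNorm {F : Type*} [NormedAddCommGroup F] (f : E → F)
    (p : ℝ≥0∞) (μ : Measure E) (x : E) : eLpNorm f p (μ.restrict (ball x 1)) ≤ ulLpNorm f p μ :=
  le_iSup (fun x => eLpNorm f p (μ.restrict (ball x 1))) x

theorem exists_ulLpNorm_le_mul_iSup_ball (F : Type*) [NormedAddCommGroup F] [NormedSpace ℝ E]
    [FiniteDimensional ℝ E] [BorelSpace E] (μ : Measure E) {p : ℝ≥0∞} (hp : 1 ≤ p) {r : ℝ}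
    (hr : 0 < r) :
    ∃ N : ℝ≥0, ∀ h : E → F, AEStronglyMeasurable h μ →
      ulLpNorm h p μ ≤ N * ⨆ x, eLpNorm h p (μ.restrict (ball x r)) := by
  have := FiniteDimensional.proper ℝ E
  obtain ⟨T, -, hT, hcover⟩ := (isCompact_closedBall (0 : E) 1).finite_cover_balls hr
  refine ⟨hT.toFinset.card, fun h hh => iSup_le fun x => ?_⟩
  have hsum : eLpNorm ((ball x 1).indicator h) p μ ≤
      (1 : ℝ≥0) * ∑ t ∈ hT.toFinset, eLpNorm ((ball (x + t) r).indicator h) p μ := by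
    refine eLpNorm_le_mul_sum_eLpNorm hp (fun t _ => hh.indicator measurableSet_ball) fun y => ?_
    by_cases hy : y ∈ ball x 1
    · obtain ⟨t, ht, hyt⟩ := Set.mem_iUnion₂.1
        (hcover (show y - x ∈ closedBall 0 1 by simpa [dist_eq_norm] using (mem_ball.1 hy).le))
      have hyt' : y ∈ ball (x + t) r := by
        rwa [mem_ball, dist_eq_norm, ← sub_sub, ← dist_eq_norm]
      rw [ENNReal.coe_one, one_mul, Set.indicator_of_mem hy]
      refine le_of_eq_of_le ?_ (Finset.single_le_sum (fun _ _ => zero_le) (hT.mem_toFinset.2 ht))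
      rw [Set.indicator_of_mem hyt']
    · simp [hy]
  simp only [eLpNorm_indicator_eq_eLpNorm_restrict measurableSet_ball, ENNReal.coe_one,
    one_mul] at hsum
  refine hsum.trans ((Finset.sum_le_card_nsmul _ _ _ fun t _ =>
    le_iSup (fun x => eLpNorm h p (μ.restrict (ball x r))) (x + t)).trans_eq ?_)
  simp

variable [NormedSpace ℝ E] [FiniteDimensional ℝ E] [BorelSpace E]

theorem exists_eLpNorm_iteratedFDeriv_mul_cutoff_le {χ : E → ℝ} {k : ℕ} {r : ℝ}
    (hχ : ContDiff ℝ k χ) (hχ_supp : HasCompactSupport χ) (hχ_ball : tsupport χ ⊆ ball 0 r)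
    (μ : Measure E) {p : ℝ≥0∞} (hp : 1 ≤ p) :
    ∃ C : ℝ≥0, ∀ f : E → ℝ, ContDiff ℝ k f → ∀ x,
      eLpNorm (iteratedFDeriv ℝ k fun y => f y * χ (y - x)) p μ ≤
        C * ∑ j ∈ Finset.range (k + 1),
          eLpNorm (iteratedFDeriv ℝ j f) p (μ.restrict (ball x r)) := by
  have hbound (i : ℕ) (hi : i ≤ k) : ∃ M : ℝ≥0, ∀ y, ‖iteratedFDeriv ℝ i χ y‖ₑ ≤ M := by
    obtain ⟨M, hM⟩ := (hχ_supp.iteratedFDeriv i).exists_bound_of_continuous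
      (hχ.continuous_iteratedFDeriv (by exact_mod_cast hi))
    exact ⟨M.toNNReal, fun y => enorm_le_coe.2 (NNReal.le_toNNReal_of_coe_le (hM y))⟩
  choose! M hM using hbound
  refine ⟨2 ^ k * ∑ i ∈ Finset.range (k + 1), M i, fun f hf x => ?_⟩
  have hχx : ContDiff ℝ k fun y => χ (y - x) := hχ.comp (contDiff_id.sub contDiff_const)
  have hsupp : Function.support (iteratedFDeriv ℝ k fun y => f y * χ (y - x)) ⊆ ball x r := by
    refine (support_iteratedFDeriv_subset k).trans (tsupport_mul_subset_right.trans ?_)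
    rw [show (fun y => χ (y - x)) = χ ∘ Homeomorph.subRight x from rfl, tsupport_comp_eq_preimage]
    exact fun y hy => by simpa [dist_eq_norm] using hχ_ball hy
  have hpoint (y : E) : ‖iteratedFDeriv ℝ k (fun y => f y * χ (y - x)) y‖ₑ ≤
      ↑(2 ^ k * ∑ i ∈ Finset.range (k + 1), M i) *
        ∑ j ∈ Finset.range (k + 1), ‖iteratedFDeriv ℝ j f y‖ₑ := by
    refine (enorm_iteratedFDeriv_mul_le hf hχx y).trans ?_
    rw [ENNReal.coe_mul, mul_assoc]
    gcongr
    rw [Finset.mul_sum]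
    refine Finset.sum_le_sum fun j _ => ?_
    rw [mul_comm, iteratedFDeriv_comp_sub]
    gcongr
    refine (hM _ (Nat.sub_le k j) _).trans ?_
    exact_mod_cast Finset.single_le_sum (f := M) (fun _ _ => zero_le)
      (Finset.mem_range_succ_iff.2 (Nat.sub_le k j))
  rw [← eLpNorm_restrict_eq_of_support_subset (ε := E [×k]→L[ℝ] ℝ) hsupp]
  refine eLpNorm_le_mul_sum_eLpNorm hp (fun j hj => ?_) hpoint
  exact (hf.continuous_iteratedFDeriv
    (by exact_mod_cast Finset.mem_range_succ_iff.1 hj)).aestronglyMeasurable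

theorem exists_eLpNorm_iteratedFDeriv_mul_cutoff_mul_cutoff_le {χ : E → ℝ} {k : ℕ}
    (hχ : ContDiff ℝ k χ) (hχ_supp : HasCompactSupport χ) (hχ_ball : tsupport χ ⊆ ball 0 1)
    (hχ_le : ∀ y, ‖χ y‖ ≤ 1) (μ : Measure E) [μ.IsAddHaarMeasure] {p : ℝ≥0∞} (hp : 2 ≤ p)
    (hp_top : p ≠ ⊤) :
    ∃ C : ℝ≥0, ∀ f g : E → ℝ, ContDiff ℝ k f → ContDiff ℝ k g → ∀ x,
      eLpNorm (iteratedFDeriv ℝ k fun y => f y * χ (y - x) * (g y * χ (y - x))) p μ ≤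
        C * (eLpNorm f ⊤ μ * ∑ j ∈ Finset.range (k + 1), ulLpNorm (iteratedFDeriv ℝ j g) p μ +
          eLpNorm g ⊤ μ * ∑ j ∈ Finset.range (k + 1), ulLpNorm (iteratedFDeriv ℝ j f) p μ) := by
  obtain ⟨C, hC⟩ := exists_eLpNorm_iteratedFDeriv_mul_le μ hp hp_top k
  obtain ⟨K, hK⟩ := exists_eLpNorm_iteratedFDeriv_mul_cutoff_le hχ hχ_supp hχ_ball μ
    (one_le_two.trans hp)
  refine ⟨C * K, fun f g hf hg x => ?_⟩
  have hχx : ContDiff ℝ k fun y => χ (y - x) := hχ.comp (contDiff_id.sub contDiff_const)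
  have hχx_supp : HasCompactSupport fun y => χ (y - x) :=
    hχ_supp.comp_homeomorph (Homeomorph.subRight x)
  have hsup (h : E → ℝ) : eLpNorm (fun y => h y * χ (y - x)) ⊤ μ ≤ eLpNorm h ⊤ μ :=
    eLpNorm_mono fun y => by
      rw [norm_mul]
      exact mul_le_of_le_one_right (norm_nonneg _) (hχ_le _)
  have hderiv {h : E → ℝ} (hh : ContDiff ℝ k h) :
      eLpNorm (iteratedFDeriv ℝ k fun y => h y * χ (y - x)) p μ ≤
        K * ∑ j ∈ Finset.range (k + 1), ulLpNorm (iteratedFDeriv ℝ j h) p μ :=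
    (hK h hh x).trans <| by
      gcongr
      exact eLpNorm_restrict_ball_le_ulLpNorm ..
  refine (hC _ _ (hf.mul hχx) (hg.mul hχx) hχx_supp.mul_left hχx_supp.mul_left).trans ?_
  calc _ ≤ C * (eLpNorm f ⊤ μ *
            (K * ∑ j ∈ Finset.range (k + 1), ulLpNorm (iteratedFDeriv ℝ j g) p μ) +
          eLpNorm g ⊤ μ *
            (K * ∑ j ∈ Finset.range (k + 1), ulLpNorm (iteratedFDeriv ℝ j f) p μ)) := by
        gcongr
        exacts [hsup f, hderiv hg, hsup g, hderiv hf]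
    _ = _ := by
        push_cast
        ring

theorem exists_eLpNorm_iteratedFDeriv_mul_restrict_halfBall_le (μ : Measure E)
    [μ.IsAddHaarMeasure] {p : ℝ≥0∞} (hp : 2 ≤ p) (hp_top : p ≠ ⊤) (k : ℕ) :
    ∃ C : ℝ≥0, ∀ f g : E → ℝ, ContDiff ℝ k f → ContDiff ℝ k g → ∀ x,
      eLpNorm (iteratedFDeriv ℝ k fun y => f y * g y) p (μ.restrict (ball x (1 / 2))) ≤
        C * (eLpNorm f ⊤ μ * ∑ j ∈ Finset.range (k + 1), ulLpNorm (iteratedFDeriv ℝ j g) p μ +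
          eLpNorm g ⊤ μ * ∑ j ∈ Finset.range (k + 1), ulLpNorm (iteratedFDeriv ℝ j f) p μ) := by
  let χ : ContDiffBump (0 : E) := ⟨1 / 2, 3 / 4, by norm_num, by norm_num⟩
  have hχ_ball : tsupport χ ⊆ ball 0 1 := by
    rw [χ.tsupport_eq]
    exact closedBall_subset_ball (by norm_num [χ])
  obtain ⟨C, hC⟩ := exists_eLpNorm_iteratedFDeriv_mul_cutoff_mul_cutoff_le (k := k) χ.contDiff
    χ.hasCompactSupport hχ_ball
    (fun y => (Real.norm_of_nonneg χ.nonneg).trans_le χ.le_one) μ hp hp_top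
  refine ⟨C, fun f g hf hg x => ?_⟩
  have hlocal : Set.EqOn (iteratedFDeriv ℝ k fun y => f y * g y)
      (iteratedFDeriv ℝ k fun y => f y * χ (y - x) * (g y * χ (y - x))) (ball x (1 / 2)) := by
    intro y hy
    refine (Filter.EventuallyEq.iteratedFDeriv ℝ ?_ k).eq_of_nhds
    filter_upwards [isOpen_ball.mem_nhds hy] with z hz
    have hz_one : χ (z - x) = 1 := χ.one_of_mem_closedBall
      (by simpa [χ, ← dist_eq_norm] using (mem_ball.1 hz).le)
    rw [hz_one, mul_one, mul_one]
  calc eLpNorm (iteratedFDeriv ℝ k fun y => f y * g y) p (μ.restrict (ball x (1 / 2)))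
      = eLpNorm (iteratedFDeriv ℝ k fun y => f y * χ (y - x) * (g y * χ (y - x))) p
          (μ.restrict (ball x (1 / 2))) :=
        eLpNorm_congr_ae (ae_restrict_of_forall_mem measurableSet_ball hlocal)
    _ ≤ eLpNorm (iteratedFDeriv ℝ k fun y => f y * χ (y - x) * (g y * χ (y - x))) p μ :=
        eLpNorm_restrict_le ..
    _ ≤ _ := hC f g hf hg x

theorem exists_ulLpNorm_iteratedFDeriv_mul_le (μ : Measure E) [μ.IsAddHaarMeasure]
    {p : ℝ≥0∞} (hp : 2 ≤ p) (hp_top : p ≠ ⊤) (k : ℕ) :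
    ∃ C : ℝ≥0, ∀ f g : E → ℝ, ContDiff ℝ k f → ContDiff ℝ k g →
      ulLpNorm (iteratedFDeriv ℝ k fun y => f y * g y) p μ ≤
        C * (eLpNorm f ⊤ μ * ∑ j ∈ Finset.range (k + 1), ulLpNorm (iteratedFDeriv ℝ j g) p μ +
          eLpNorm g ⊤ μ * ∑ j ∈ Finset.range (k + 1), ulLpNorm (iteratedFDeriv ℝ j f) p μ) := by
  obtain ⟨C, hC⟩ := exists_eLpNorm_iteratedFDeriv_mul_restrict_halfBall_le μ hp hp_top k
  obtain ⟨N, hN⟩ := exists_ulLpNorm_le_mul_iSup_ball (E [×k]→L[ℝ] ℝ) μ (one_le_two.trans hp)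
    (one_half_pos (α := ℝ))
  refine ⟨N * C, fun f g hf hg => ?_⟩
  have hcont := (hf.mul hg).continuous_iteratedFDeriv (m := k) le_rfl
  refine (hN _ hcont.aestronglyMeasurable).trans ?_
  rw [ENNReal.coe_mul, mul_assoc]
  gcongr
  exact iSup_le (hC f g hf hg)

end Localization

section UniformlyLocalSobolev

variable {d : ℕ}

theorem exists_ulLpNorm_iteratedFDeriv_le_ulSobolev (F : Type*) [NormedAddCommGroup F]
    [NormedSpace ℝ F] {j s : ℕ} (hj : j ≤ s) :
    ∃ C : ℝ≥0, ∀ f : EuclideanSpace ℝ (Fin d) → F, ContDiff ℝ s f →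
      ulLpNorm (iteratedFDeriv ℝ j f) 2 volume ≤ C * ulSobolev d s f := by
  obtain ⟨K, hK⟩ := exists_enorm_iteratedFDeriv_le_mul_sum_Dm d j F
  refine ⟨K * d ^ j, fun f hf => iSup_le fun x => ?_⟩
  have hfj : ContDiff ℝ j f := hf.of_le (by exact_mod_cast hj)
  calc eLpNorm (iteratedFDeriv ℝ j f) 2 (volume.restrict (ball x 1))
      ≤ K * ∑ i : Fin j → Fin d,
          eLpNorm (Dm (fun l => (List.ofFn i).count l) f) 2 (volume.restrict (ball x 1)) := by
        refine eLpNorm_le_mul_sum_eLpNorm one_le_two (fun i _ => ?_) (hK f hfj)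
        rw [Dm_count_eq_foldr_pd _ (by simpa using hfj)]
        exact (contDiff_foldr_pd (n := 0) _
          (by simpa using hfj)).continuous.aestronglyMeasurable
    _ ≤ K * ∑ _i : Fin j → Fin d, ulSobolev d s f := by
        gcongr with i
        refine (eLpNorm_restrict_ball_le_ulLpNorm ..).trans
          (Finset.single_le_sum (f := fun α => ulLpNorm (Dm α f) 2 volume)
            (fun _ _ => zero_le) (count_mem_mSet ?_))
        simpa using hj
    _ = _ := by simp [mul_assoc]

theorem exists_ulLpNorm_Dm_mul_le_ulSobolev {s : ℕ} {α : Fin d → ℕ} (hα : ∑ i, α i ≤ s) :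
    ∃ C : ℝ≥0, ∀ f g : EuclideanSpace ℝ (Fin d) → ℝ, ContDiff ℝ s f → ContDiff ℝ s g →
      ulLpNorm (Dm α fun y => f y * g y) 2 volume ≤
        C * (eLpNorm f ⊤ volume * ulSobolev d s g + eLpNorm g ⊤ volume * ulSobolev d s f) := by
  set k := ∑ i, α i
  choose! A hA using fun j (hj : j ≤ s) =>
    exists_ulLpNorm_iteratedFDeriv_le_ulSobolev (d := d) ℝ hj
  obtain ⟨B, hB⟩ := exists_ulLpNorm_iteratedFDeriv_mul_le
    (volume : Measure (EuclideanSpace ℝ (Fin d))) le_rfl ENNReal.ofNat_ne_top k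
  set K := ∑ j ∈ Finset.range (k + 1), A j
  have hsum {f : EuclideanSpace ℝ (Fin d) → ℝ} (hf : ContDiff ℝ s f) :
      ∑ j ∈ Finset.range (k + 1), ulLpNorm (iteratedFDeriv ℝ j f) 2 volume ≤
        K * ulSobolev d s f := by
    push_cast [K]
    rw [Finset.sum_mul]
    gcongr with j hj
    exact hA j ((Finset.mem_range_succ_iff.1 hj).trans hα) f hf
  refine ⟨B * K, fun f g hf hg => ?_⟩
  have hfk : ContDiff ℝ k f := hf.of_le (by exact_mod_cast hα)
  have hgk : ContDiff ℝ k g := hg.of_le (by exact_mod_cast hα)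
  calc ulLpNorm (Dm α fun y => f y * g y) 2 volume
      ≤ ulLpNorm (iteratedFDeriv ℝ k fun y => f y * g y) 2 volume :=
        iSup_mono fun x => eLpNorm_mono (norm_Dm_le_norm_iteratedFDeriv α (hfk.mul hgk))
    _ ≤ _ := hB f g hfk hgk
    _ ≤ B * (eLpNorm f ⊤ volume * (K * ulSobolev d s g) +
          eLpNorm g ⊤ volume * (K * ulSobolev d s f)) := by
        gcongr
        exacts [hsum hg, hsum hf]
    _ = _ := by
        push_cast
        ring

theorem moser_product_general (d s : ℕ) :
    ∃ C : ℝ, 0 < C ∧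
      ∀ f g : EuclideanSpace ℝ (Fin d) → ℝ, ContDiff ℝ s f → ContDiff ℝ s g →
        ∀ α : Fin d → ℕ, (∑ i, α i) ≤ s →
          (⨆ x : EuclideanSpace ℝ (Fin d),
              eLpNorm (Dm α fun y => f y * g y) 2 (volume.restrict (ball x 1)))
            ≤ ENNReal.ofReal C *
              (eLpNorm f ⊤ volume * ulSobolev d s g
                + eLpNorm g ⊤ volume * ulSobolev d s f) := by
  choose! C hC using fun (α : Fin d → ℕ) (hα : ∑ i, α i ≤ s) =>
    exists_ulLpNorm_Dm_mul_le_ulSobolev hα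
  refine ⟨(1 + ∑ α ∈ mSet d s, C α : ℝ≥0), by positivity, fun f g hf hg α hα => ?_⟩
  refine (hC α hα f g hf hg).trans ?_
  rw [ENNReal.ofReal_coe_nnreal]
  gcongr
  exact (Finset.single_le_sum (fun _ _ => zero_le) (mem_mSet.2 hα)).trans le_add_self

end UniformlyLocalSobolev

/-- **Lemma 2.8(i) of the paper**: the Moser-type product estimate
`‖D^α(fg)‖_{L²_ul} ≤ C (‖f‖_{L^∞} ‖g‖_{H^s_ul} + ‖g‖_{L^∞} ‖f‖_{H^s_ul})`. -/
theorem moser_product (d : ℕ) (hd : 1 ≤ d) (s : ℕ) (hs : 1 ≤ s) :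
    ∃ C : ℝ, 0 < C ∧
      ∀ f g : EuclideanSpace ℝ (Fin d) → ℝ, ContDiff ℝ (⊤ : ℕ∞) f → ContDiff ℝ (⊤ : ℕ∞) g →
        ∀ α : Fin d → ℕ, (∑ i, α i) ≤ s →
          (⨆ x : EuclideanSpace ℝ (Fin d),
              eLpNorm (Dm α fun y => f y * g y) 2 (volume.restrict (ball x 1)))
            ≤ ENNReal.ofReal C *
              (eLpNorm f ⊤ volume * ulSobolev d s g
                + eLpNorm g ⊤ volume * ulSobolev d s f) := by
  obtain ⟨C, hC, hmoser⟩ := moser_product_general d s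
  exact ⟨C, hC, fun f g hf hg =>
    hmoser f g (hf.of_le (mod_cast le_top)) (hg.of_le (mod_cast le_top))⟩
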